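/- arXiv:1711.08671 — 5 statements merged into one kernel-verified Lean document; each statement's English description precedes it below -/
import Mathlib

section
/- Let α be a positive real number. Then every complex root μ of the equation μ·e^μ + α = 0 has negative real part (Re μ < 0) if and only if α < π/2. -/
/-- For a positive real `α`, every complex root `μ` of `μ·e^μ + α = 0`
has negative real part if and only if `α < π/2`. -/
theorem all_roots_neg_re_iff (α : ℝ) (hα : 0 < α) :
    (∀ μ : ℂ, μ * Complex.exp μ + (α : ℂ) = 0 → μ.re < 0) ↔ α < Real.pi / 2 := by
  have key : ∀ μ : ℂ, μ * Complex.exp μ + (α : ℂ) = 0 ↔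
      (Real.exp μ.re * (μ.re * Real.cos μ.im - μ.im * Real.sin μ.im) + α = 0 ∧
       Real.exp μ.re * (μ.re * Real.sin μ.im + μ.im * Real.cos μ.im) = 0) := by
    intro μ
    rw [Complex.ext_iff]
    simp only [Complex.add_re, Complex.add_im, Complex.mul_re, Complex.mul_im, Complex.exp_re,
      Complex.exp_im, Complex.ofReal_re, Complex.ofReal_im, Complex.zero_re, Complex.zero_im]
    constructor
    · rintro ⟨h1, h2⟩
      exact ⟨by linarith, by linarith⟩
    · rintro ⟨h1, h2⟩
      exact ⟨by linarith, by linarith⟩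
  have hpi := Real.pi_gt_three
  constructor
  · intro h
    by_contra! hc
    have hδ : 0 < Real.pi / (1 + α) := by positivity
    set δ := Real.pi / (1 + α) with hδd
    have hδe : δ * (1 + α) = Real.pi := by rw [hδd]; field_simp
    have hδ2 : δ ≤ Real.pi / 2 := by nlinarith
    have hsin : ∀ y ∈ Set.Icc (Real.pi / 2) (Real.pi - δ), 0 < Real.sin y := by
      intro y hy
      exact Real.sin_pos_of_pos_of_lt_pi (by linarith [hy.1]) (by linarith [hy.2])
    have hx : ∀ y ∈ Set.Icc (Real.pi / 2) (Real.pi - δ),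
        0 ≤ -(y * Real.cos y / Real.sin y) := by
      intro y hy
      have h1 := hsin y hy
      have h2 : Real.cos y ≤ 0 :=
        Real.cos_nonpos_of_pi_div_two_le_of_le hy.1 (by linarith [hy.2])
      rw [neg_nonneg]
      apply div_nonpos_of_nonpos_of_nonneg _ h1.le
      exact mul_nonpos_of_nonneg_of_nonpos (by linarith [hy.1]) h2
    have hcont : ContinuousOn (fun y : ℝ =>
        y * Real.exp (-(y * Real.cos y / Real.sin y)) - α * Real.sin y)
        (Set.Icc (Real.pi / 2) (Real.pi - δ)) := by
      have : ContinuousOn (fun y : ℝ => y * Real.cos y / Real.sin y)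
          (Set.Icc (Real.pi / 2) (Real.pi - δ)) :=
        ContinuousOn.div (by fun_prop) (by fun_prop) (fun y hy => (hsin y hy).ne')
      fun_prop
    have hle : Real.pi / 2 ≤ Real.pi - δ := by linarith
    have hb := hx _ (Set.right_mem_Icc.2 hle)
    have hivt := intermediate_value_Icc hle hcont
    obtain ⟨y, hy, hy0⟩ := hivt (show (0 : ℝ) ∈ _ from by
      constructor
      · simp; exact hc
      · have h1 := Real.one_le_exp hb
        have h2 : Real.sin (Real.pi - δ) ≤ δ := by
          rw [Real.sin_pi_sub]; exact Real.sin_le hδ.le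
        have h3 : α * Real.sin (Real.pi - δ) ≤ α * δ := by gcongr
        have h4 := le_mul_of_one_le_right (show 0 ≤ Real.pi - δ by linarith) h1
        show 0 ≤ _ - _
        linarith)
    have hs := hsin y hy
    have hx0 := hx y hy
    have := h ⟨-(y * Real.cos y / Real.sin y), y⟩ ((key _).2 (by
      simp only at hy0 ⊢
      have e1 : -(y * Real.cos y / Real.sin y) * Real.cos y - y * Real.sin y
          = - (y / Real.sin y) := by
        field_simp
        linear_combination (-y) * Real.sin_sq_add_cos_sq y
      have e2 : -(y * Real.cos y / Real.sin y) * Real.sin y + y * Real.cos y = 0 := by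
        field_simp; ring
      rw [e1, e2]
      refine ⟨?_, by simp⟩
      generalize Real.exp _ = E at hy0 ⊢
      field_simp
      linarith))
    simp only at this
    linarith
  · intro hlt μ hμ
    by_contra! hre
    have hn : ‖μ‖ * Real.exp μ.re = α := by
      have : μ * Complex.exp μ = -(α : ℂ) := by linear_combination hμ
      have := congrArg norm this
      rwa [norm_mul, Complex.norm_exp, norm_neg, Complex.norm_real, Real.norm_of_nonneg hα.le]
        at this
    have him : |μ.im| < Real.pi / 2 := by
      have h1 := le_mul_of_one_le_right (norm_nonneg μ) (Real.one_le_exp hre)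
      have h2 := Complex.abs_im_le_norm μ
      linarith
    obtain ⟨hl, hr⟩ := abs_lt.1 him
    obtain ⟨h1, h2⟩ := (key μ).1 hμ
    have hc := Real.cos_pos_of_mem_Ioo ⟨by linarith, hr⟩
    have h3 := (mul_eq_zero.1 h2).resolve_left (Real.exp_pos _).ne'
    rcases lt_trichotomy μ.im 0 with hi | hi | hi
    · have := Real.sin_neg_of_neg_of_neg_pi_lt hi (by linarith)
      nlinarith [mul_pos (neg_pos.2 hi) hc]
    · rw [hi] at h1
      simp at h1
      have := mul_nonneg (Real.exp_pos μ.re).le hre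
      linarith
    · have := Real.sin_pos_of_pos_of_lt_pi hi (by linarith)
      nlinarith [mul_pos hi hc]
end

section
/- Let r > 0, L > 0 and k_I > 0 be real numbers. Then every complex root s of the characteristic equation k_I + s·e^{sL/r} = 0 has negative real part (Re s < 0) if and only if k_I < rπ/(2L). -/
/-- Existence of a root with nonnegative real part in the normalized equation. -/
lemma exists_root_aux (a : ℝ) (ha : Real.pi / 2 ≤ a) :
    ∃ z : ℂ, 0 ≤ z.re ∧ z * Complex.exp z = -(a : ℂ) := by
  have hpi := Real.pi_gt_three
  have ha0 : 0 < a := by linarith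
  set t : ℝ := Real.pi / 2 / a with ht
  have ht0 : 0 < t := by positivity
  have ht1 : t ≤ 1 := by rw [ht, div_le_one ha0]; exact ha
  have hta : t * a = Real.pi / 2 := by rw [ht]; field_simp
  have hle : Real.pi / 2 ≤ Real.pi - t := by linarith
  have hsin : ∀ y ∈ Set.Icc (Real.pi / 2) (Real.pi - t), 0 < Real.sin y := fun y hy =>
    Real.sin_pos_of_pos_of_lt_pi (by linarith [hy.1]) (by linarith [hy.2])
  have hx : ∀ y ∈ Set.Icc (Real.pi / 2) (Real.pi - t),
      0 ≤ -(y * Real.cos y) / Real.sin y := fun y hy => by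
    have h1 : Real.cos y ≤ 0 :=
      Real.cos_nonpos_of_pi_div_two_le_of_le hy.1 (by linarith [hy.2])
    have h2 : 0 ≤ y := by linarith [hy.1]
    have := hsin y hy
    apply div_nonneg _ this.le
    nlinarith
  have hc : ContinuousOn (fun y : ℝ => y * Real.exp (-(y * Real.cos y) / Real.sin y) / Real.sin y)
      (Set.Icc (Real.pi / 2) (Real.pi - t)) := by
    have hne : ∀ y ∈ Set.Icc (Real.pi / 2) (Real.pi - t), Real.sin y ≠ 0 :=
      fun y hy => (hsin y hy).ne'
    have h1 : ContinuousOn (fun y : ℝ => -(y * Real.cos y) / Real.sin y)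
        (Set.Icc (Real.pi / 2) (Real.pi - t)) :=
      ContinuousOn.div (by fun_prop) (by fun_prop) hne
    exact ContinuousOn.div (continuousOn_id.mul h1.rexp) (by fun_prop) hne
  have hmem : a ∈ Set.Icc
      ((fun y : ℝ => y * Real.exp (-(y * Real.cos y) / Real.sin y) / Real.sin y) (Real.pi / 2))
      ((fun y : ℝ => y * Real.exp (-(y * Real.cos y) / Real.sin y) / Real.sin y)
        (Real.pi - t)) := by
    have hm : Real.pi - t ∈ Set.Icc (Real.pi / 2) (Real.pi - t) := ⟨hle, le_rfl⟩
    constructor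
    · simpa using ha
    · have h1 := hx _ hm
      have h2 := hsin _ hm
      have h3 := Real.one_le_exp h1
      have h4 : Real.sin (Real.pi - t) ≤ t := by
        rw [Real.sin_pi_sub]; exact Real.sin_le ht0.le
      show a ≤ _ / _
      rw [le_div_iff₀ h2]
      nlinarith [mul_le_mul_of_nonneg_left h4 ha0.le,
        mul_le_mul_of_nonneg_left h3 (by linarith : 0 ≤ Real.pi - t)]
  obtain ⟨y, hy, hya⟩ := intermediate_value_Icc hle hc hmem
  have hs := hsin y hy
  have hx0 := hx y hy
  simp only at hya
  set x : ℝ := -(y * Real.cos y) / Real.sin y with hxd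
  have hxs : x * Real.sin y = -(y * Real.cos y) := by rw [hxd]; field_simp
  have hya2 : y * Real.exp x = a * Real.sin y := by
    rw [← hya]; field_simp
  refine ⟨⟨x, y⟩, hx0, ?_⟩
  apply Complex.ext
  · simp only [Complex.mul_re, Complex.exp_re, Complex.exp_im, Complex.neg_re, Complex.ofReal_re]
    apply mul_right_cancel₀ hs.ne'
    linear_combination Real.exp x * Real.cos y * hxs - hya2
      - y * Real.exp x * Real.sin_sq_add_cos_sq y
  · simp only [Complex.mul_im, Complex.exp_re, Complex.exp_im, Complex.neg_im, Complex.ofReal_im]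
    linear_combination Real.exp x * hxs

/-- For small gain, all roots of the normalized equation have negative real part. -/
lemma root_neg_aux (a : ℝ) (ha0 : 0 < a) (ha : a < Real.pi / 2) (z : ℂ)
    (hz : z * Complex.exp z = -(a : ℂ)) : z.re < 0 := by
  by_contra! hx
  have hn : ‖z‖ * Real.exp z.re = a := by
    have := congrArg norm hz
    rwa [norm_mul, Complex.norm_exp, norm_neg, Complex.norm_real, Real.norm_of_nonneg ha0.le]
      at this
  have hy : |z.im| < Real.pi / 2 := by
    have h1 := Complex.abs_im_le_norm z
    have h2 := Real.one_le_exp hx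
    nlinarith [norm_nonneg z]
  rw [abs_lt] at hy
  have hcos : 0 < Real.cos z.im := Real.cos_pos_of_mem_Ioo ⟨by linarith, hy.2⟩
  have hre := congrArg Complex.re hz
  have him := congrArg Complex.im hz
  simp only [Complex.mul_re, Complex.mul_im, Complex.exp_re, Complex.exp_im, Complex.neg_re,
    Complex.neg_im, Complex.ofReal_re, Complex.ofReal_im] at hre him
  have hE := Real.exp_pos z.re
  have him2 : z.re * Real.sin z.im + z.im * Real.cos z.im = 0 := by
    apply mul_left_cancel₀ hE.ne'
    linear_combination him
  have hre2 : Real.exp z.re * (z.re * Real.cos z.im - z.im * Real.sin z.im) = -a := by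
    linear_combination hre
  have hys : 0 ≤ z.im * Real.sin z.im := by
    rcases le_total 0 z.im with h | h
    · exact mul_nonneg h (Real.sin_nonneg_of_nonneg_of_le_pi h (by linarith [Real.pi_pos]))
    · exact mul_nonneg_of_nonpos_of_nonpos h
        (Real.sin_nonpos_of_nonpos_of_neg_pi_le h (by linarith [Real.pi_pos]))
  have hy2 : z.im ^ 2 * Real.cos z.im ≤ 0 := by
    nlinarith [mul_nonneg hx hys, congrArg (fun w => z.im * w) him2]
  have hy0 : z.im = 0 := by
    by_contra h
    have : 0 < z.im ^ 2 := by positivity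
    nlinarith [mul_pos this hcos]
  rw [hy0] at hre2
  simp at hre2
  nlinarith [mul_nonneg hE.le hx]

/-- For `r > 0`, `L > 0`, `k_I > 0`, every complex root `s` of the
characteristic equation `k_I + s·e^{sL/r} = 0` has negative real part
if and only if `k_I < rπ/(2L)`. -/
theorem all_poles_neg_re_iff (r L kI : ℝ) (hr : 0 < r) (hL : 0 < L) (hk : 0 < kI) :
    (∀ s : ℂ, (kI : ℂ) + s * Complex.exp (s * (L : ℂ) / (r : ℂ)) = 0 → s.re < 0) ↔
      kI < r * Real.pi / (2 * L) := by
  have hrc : (r : ℂ) ≠ 0 := by exact_mod_cast hr.ne'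
  have hLc : (L : ℂ) ≠ 0 := by exact_mod_cast hL.ne'
  have hiff : kI < r * Real.pi / (2 * L) ↔ kI * L / r < Real.pi / 2 := by
    rw [lt_div_iff₀ (by positivity), div_lt_div_iff₀ hr (by norm_num)]
    constructor <;> intro h <;> linarith
  rw [hiff]
  constructor
  · intro h
    by_contra! hc
    obtain ⟨z, hz0, hz⟩ := exists_root_aux _ hc
    have h1 : (((r / L : ℝ) : ℂ) * z) * (L : ℂ) / (r : ℂ) = z := by
      push_cast; field_simp
    have h2 := h (((r / L : ℝ) : ℂ) * z) (by
      rw [h1, mul_assoc, hz]; push_cast; field_simp; ring)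
    rw [Complex.re_ofReal_mul] at h2
    have : 0 ≤ r / L * z.re := by positivity
    linarith
  · intro h s hs
    have h1 : s * (L : ℂ) / (r : ℂ) = ((L / r : ℝ) : ℂ) * s := by
      push_cast; field_simp
    have h2 := root_neg_aux _ (by positivity) h (s * (L : ℂ) / (r : ℂ)) (by
      push_cast
      linear_combination (L : ℂ) / r * hs)
    rw [h1, Complex.re_ofReal_mul] at h2
    by_contra! h3
    have : 0 ≤ L / r * s.re := by positivity
    linarith
end

section
/- Define H(η) = (η/sin η)·exp(−η·cos η / sin η) for η with sin η ≠ 0. Then for every natural number k and every η ∈ (2kπ, (2k+1)π), H is differentiable at η with H'(η) = exp(−η·cos η/sin η)·(sin²η − η·sin(2η) + η²)/sin³η ≥ 0; consequently H is monotone increasing on each interval (2kπ, (2k+1)π). -/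
open Real

/-- The function `H(η) = (η/sin η)·exp(−η·cos η / sin η)`. -/
noncomputable def H (η : ℝ) : ℝ := (η / Real.sin η) * Real.exp (-η * Real.cos η / Real.sin η)

/-- On each interval `(2kπ, (2k+1)π)`, `H` is differentiable with
nonnegative derivative `exp(−η·cos η/sin η)·(sin²η − η·sin(2η) + η²)/sin³η`,
and consequently `H` is monotone increasing there. -/
theorem H_hasDerivAt_and_monotoneOn (k : ℕ) :
    (∀ η ∈ Set.Ioo (2 * k * π) ((2 * k + 1) * π),
      HasDerivAt H
        (Real.exp (-η * Real.cos η / Real.sin η) *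
          (Real.sin η ^ 2 - η * Real.sin (2 * η) + η ^ 2) / Real.sin η ^ 3) η ∧
      Real.exp (-η * Real.cos η / Real.sin η) *
          (Real.sin η ^ 2 - η * Real.sin (2 * η) + η ^ 2) / Real.sin η ^ 3 ≥ 0) ∧
    MonotoneOn H (Set.Ioo (2 * k * π) ((2 * k + 1) * π)) := by
  have hsin : ∀ η ∈ Set.Ioo (2 * k * π) ((2 * k + 1) * π), 0 < Real.sin η := by
    intro η hη
    have h := Real.sin_sub_nat_mul_two_pi η k
    rw [← h]
    apply Real.sin_pos_of_pos_of_lt_pi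
    · linarith [hη.1]
    · linarith [hη.2]
  have key : ∀ η ∈ Set.Ioo (2 * k * π) ((2 * k + 1) * π),
      HasDerivAt H
        (Real.exp (-η * Real.cos η / Real.sin η) *
          (Real.sin η ^ 2 - η * Real.sin (2 * η) + η ^ 2) / Real.sin η ^ 3) η ∧
      Real.exp (-η * Real.cos η / Real.sin η) *
          (Real.sin η ^ 2 - η * Real.sin (2 * η) + η ^ 2) / Real.sin η ^ 3 ≥ 0 := by
    intro η hη
    have hs := hsin η hη
    have hne := hs.ne'
    have hcs := Real.sin_sq_add_cos_sq η
    constructor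
    · have h1 := (hasDerivAt_id η).div (Real.hasDerivAt_sin η) hne
      have h2 := (((hasDerivAt_id η).neg.mul (Real.hasDerivAt_cos η)).div
        (Real.hasDerivAt_sin η) hne).exp
      have h3 := h1.mul h2
      refine HasDerivAt.congr_deriv (f := H) h3 ?_
      simp only [Pi.mul_apply, Pi.neg_apply, Pi.div_apply, id]
      rw [Real.sin_two_mul]
      generalize Real.exp (-η * Real.cos η / Real.sin η) = E
      field_simp
      linear_combination (E * η ^ 2) * hcs
    · have hq : Real.sin η ^ 2 - η * Real.sin (2 * η) + η ^ 2
          = (Real.sin η - η * Real.cos η) ^ 2 + (η * Real.sin η) ^ 2 := by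
        rw [Real.sin_two_mul]
        linear_combination (-η ^ 2) * hcs
      rw [hq]
      positivity
  refine ⟨key, ?_⟩
  apply monotoneOn_of_deriv_nonneg (convex_Ioo _ _)
  · intro η hη
    exact (key η hη).1.continuousAt.continuousWithinAt
  · intro η hη
    rw [interior_Ioo] at hη
    exact (key η hη).1.differentiableAt.differentiableWithinAt
  · intro η hη
    rw [interior_Ioo] at hη
    rw [(key η hη).1.deriv]
    exact (key η hη).2
end

section
/- Let r, L > 0 and let k_I ∈ (0, k_I*) where k_I* = (r/(2L))·Π(2−√2). Then there exist constants M ≥ 1 and ω > 0 such that for every pair (φ, ξ) with φ : [0,L] × [0,∞) → ℝ continuously differentiable and ξ : [0,∞) → ℝ continuously differentiable satisfying φ_t(x,t) = −r φ_x(x,t) for all x ∈ (0,L), ξ'(t) = φ(L,t), and φ(0,t) = −k_I ξ(t) for all t ≥ 0, one has ∫₀^L φ(x,t)² dx + ξ(t)² ≤ M e^{−ωt} (∫₀^L φ(x,0)² dx + ξ(0)²) for all t ≥ 0. -/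
/-- The function `Π(z) = √(z(2−z))·e^{−z/2}` on `[0,2]`. -/
noncomputable def PiFun (z : ℝ) : ℝ := Real.sqrt (z * (2 - z)) * Real.exp (-z / 2)

lemma transport_aux (r L : ℝ) (hr : 0 < r) (φ : ℝ → ℝ → ℝ)
    (hφ : ContDiffOn ℝ 1 (fun p : ℝ × ℝ => φ p.1 p.2) (Set.Icc 0 L ×ˢ Set.Ici 0))
    (hpde : ∀ x ∈ Set.Ioo (0 : ℝ) L, ∀ t ∈ Set.Ici (0 : ℝ),
        deriv (fun τ => φ x τ) t = -r * deriv (fun y => φ y t) x)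
    (x t s : ℝ) (hx : 0 ≤ x) (ht : 0 ≤ t) (hs : 0 ≤ s) (hxL : x + r * s ≤ L) :
    φ (x + r * s) (t + s) = φ x t := by
  rcases hs.eq_or_lt with rfl | hs
  · simp
  have hcont : ContinuousOn (fun σ : ℝ => φ (x + r * σ) (t + σ)) (Set.Icc 0 s) := by
    have h1 : ContinuousOn (fun σ : ℝ => ((x + r * σ, t + σ) : ℝ × ℝ)) (Set.Icc 0 s) := by
      fun_prop
    refine hφ.continuousOn.comp h1 ?_
    intro σ hσ
    have : r * σ ≤ r * s := by gcongr; exact hσ.2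
    have h0 : 0 ≤ r * σ := mul_nonneg hr.le hσ.1
    exact ⟨⟨by simp only; linarith, by simp only; linarith⟩,
      by simp only [Set.mem_Ici]; linarith [hσ.1]⟩
  have hder : ∀ σ ∈ Set.Ioo 0 s, HasDerivAt (fun σ : ℝ => φ (x + r * σ) (t + σ)) 0 σ := by
    intro σ hσ
    have h1 : r * σ < r * s := by gcongr; exact hσ.2
    have h0 : 0 < r * σ := mul_pos hr hσ.1
    have hX : x + r * σ ∈ Set.Ioo 0 L := ⟨by linarith, by linarith⟩
    have hT : 0 < t + σ := by linarith [hσ.1]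
    have hnhds : Set.Icc 0 L ×ˢ Set.Ici 0 ∈ nhds ((x + r * σ, t + σ) : ℝ × ℝ) :=
      prod_mem_nhds (Icc_mem_nhds hX.1 hX.2) (Ici_mem_nhds hT)
    have hd : DifferentiableAt ℝ (fun p : ℝ × ℝ => φ p.1 p.2) (x + r * σ, t + σ) :=
      (hφ.contDiffAt hnhds).differentiableAt (by norm_num)
    obtain ⟨F, hF⟩ : ∃ F, HasFDerivAt (fun p : ℝ × ℝ => φ p.1 p.2) F (x + r * σ, t + σ) :=
      ⟨_, hd.hasFDerivAt⟩
    have e1 : HasDerivAt (fun y => φ y (t + σ)) (F (1, 0)) (x + r * σ) := by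
      have q := HasFDerivAt.comp_hasDerivAt (f := fun y : ℝ => ((y, t + σ) : ℝ × ℝ)) (x + r * σ) hF
        ((hasDerivAt_id' (x + r * σ)).prodMk (hasDerivAt_const (x + r * σ) (t + σ)))
      exact q
    have e2 : HasDerivAt (fun τ => φ (x + r * σ) τ) (F (0, 1)) (t + σ) := by
      have q := HasFDerivAt.comp_hasDerivAt (f := fun y : ℝ => ((x + r * σ, y) : ℝ × ℝ)) (t + σ) hF
        ((hasDerivAt_const (t + σ) (x + r * σ)).prodMk (hasDerivAt_id' (t + σ)))
      exact q
    have e3 : HasDerivAt (fun σ : ℝ => φ (x + r * σ) (t + σ)) (F (r, 1)) σ := by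
      have ha : HasDerivAt (fun σ : ℝ => x + r * σ) r σ := by
        simpa using ((hasDerivAt_id σ).const_mul r).const_add x
      have hb : HasDerivAt (fun σ : ℝ => t + σ) 1 σ := by
        simpa using (hasDerivAt_id σ).const_add t
      have q := HasFDerivAt.comp_hasDerivAt
        (f := fun σ : ℝ => ((x + r * σ, t + σ) : ℝ × ℝ)) σ hF (ha.prodMk hb)
      exact q
    have h4 := hpde _ hX _ hT.le
    rw [e1.deriv, e2.deriv] at h4
    have h5 : F (r, 1) = r * F (1, 0) + F (0, 1) := by
      have : ((r, 1) : ℝ × ℝ) = r • ((1, 0) : ℝ × ℝ) + (0, 1) := by simp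
      rw [this, map_add, map_smul]; simp
    have h6 : F (r, 1) = 0 := by rw [h5, h4]; ring
    rwa [h6] at e3
  obtain ⟨c, hc, h⟩ := exists_hasDerivAt_eq_slope _ (fun _ => (0 : ℝ)) hs hcont hder
  simp only [mul_zero, add_zero, sub_zero] at h
  have := (div_eq_zero_iff.1 h.symm).resolve_right hs.ne'
  linarith

/-- Difference bound for the delay equation. -/
lemma diff_aux (T k : ℝ) (hk : 0 < k) (ξ : ℝ → ℝ)
    (hd : ∀ t, T ≤ t → HasDerivAt ξ (-k * ξ (t - T)) t)
    (a t S : ℝ) (haT : T ≤ a) (hat : a ≤ t) (htT : t ≤ a + T)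
    (hS : ∀ s, a - T ≤ s → s ≤ t - T → ξ s ^ 2 ≤ S) :
    (ξ t - ξ a) ^ 2 ≤ (k * T) ^ 2 * S := by
  have hS0 : 0 ≤ S := (sq_nonneg _).trans (hS (a - T) le_rfl (by linarith))
  have h := norm_image_sub_le_of_norm_deriv_le_segment' (f := ξ)
    (f' := fun t => -k * ξ (t - T)) (a := a) (b := t) (C := k * Real.sqrt S)
    (fun x hx => (hd x (haT.trans hx.1)).hasDerivWithinAt) (by
      intro x hx
      rw [norm_mul, norm_neg, Real.norm_of_nonneg hk.le]
      gcongr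
      exact Real.abs_le_sqrt (hS _ (by linarith [hx.1]) (by linarith [hx.2])))
    t ⟨hat, le_rfl⟩
  have h2 : |ξ t - ξ a| ≤ k * Real.sqrt S * T :=
    h.trans (by gcongr; linarith)
  calc (ξ t - ξ a) ^ 2 = |ξ t - ξ a| ^ 2 := (sq_abs _).symm
    _ ≤ (k * Real.sqrt S * T) ^ 2 := by gcongr
    _ = (k * T) ^ 2 * (Real.sqrt S) ^ 2 := by ring
    _ = _ := by rw [Real.sq_sqrt hS0]

lemma decay_aux (T k D : ℝ) (hT : 0 < T) (hk : 0 < k) (hkT : k * T ≤ 1 / 2) (hD : 0 < D)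
    (ξ : ℝ → ℝ)
    (hd : ∀ t, T ≤ t → HasDerivAt ξ (-k * ξ (t - T)) t)
    (h0 : ∀ t, 0 ≤ t → t ≤ 2 * T → ξ t ^ 2 ≤ D * Real.exp (-(k / 4) * t)) :
    ∀ t, 0 ≤ t → ξ t ^ 2 ≤ D * Real.exp (-(k / 4) * t) := by
  have key : ∀ n : ℕ, ∀ t, 0 ≤ t → t ≤ (n + 2) * T →
      ξ t ^ 2 ≤ D * Real.exp (-(k / 4) * t) := by
    intro n
    induction n with
    | zero => intro t h1 h2; exact h0 t h1 (by simpa using h2)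
    | succ n ih =>
      intro t h1 h2
      push_cast at h2
      set a : ℝ := (n + 2) * T with ha
      have ha2 : 2 * T ≤ a := by
        rw [ha]; gcongr; linarith [(Nat.cast_nonneg n : (0:ℝ) ≤ n)]
      rcases le_total t a with hta | hta
      · exact ih t h1 hta
      have htb : t ≤ a + T := by rw [ha]; linarith
      have hξd : ∀ x ∈ Set.Icc a (a + T),
          HasDerivAt (fun x => ξ x ^ 2) (2 * ξ x * (-k * ξ (x - T))) x := by
        intro x hx
        have := (hd x (by linarith [hx.1])).pow 2
        exact this.congr_deriv (by simp)
      have hB : ∀ x, HasDerivAt (fun x => D * Real.exp (-(k / 4) * x))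
          (D * (Real.exp (-(k / 4) * x) * (-(k / 4)))) x := by
        intro x
        have h : HasDerivAt (fun x => -(k / 4) * x) (-(k / 4)) x := by
          simpa using (hasDerivAt_id x).const_mul (-(k / 4))
        exact h.exp.const_mul D
      refine image_le_of_deriv_right_lt_deriv_boundary' (a := a) (b := a + T)
        (f := fun x => ξ x ^ 2) (f' := fun x => 2 * ξ x * (-k * ξ (x - T)))
        (B := fun x => D * Real.exp (-(k / 4) * x))
        (fun x hx => (hξd x hx).continuousAt.continuousWithinAt)
        (fun x hx => (hξd x ⟨hx.1, hx.2.le⟩).hasDerivWithinAt)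
        (ih a (by linarith) le_rfl)
        (fun x hx => (hB x).continuousAt.continuousWithinAt)
        (fun x hx => (hB x).hasDerivWithinAt) ?_ ⟨hta, htb⟩
      intro x hx hEq
      change ξ x ^ 2 = D * Real.exp (-(k / 4) * x) at hEq
      change 2 * ξ x * (-k * ξ (x - T)) < D * (Real.exp (-(k / 4) * x) * -(k / 4))
      have hBp : 0 < D * Real.exp (-(k / 4) * x) := by positivity
      have hR := diff_aux T k hk ξ hd (x - T) x (D * Real.exp (-(k / 4) * x) * (4 / 3))
        (by linarith [hx.1]) (by linarith) (by linarith) (by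
          intro s hs1 hs2
          have h3 := ih s (by linarith [hx.1]) (by linarith [hx.2])
          refine h3.trans ?_
          have h4 : Real.exp (-(k / 4) * s) ≤ Real.exp (-(k / 4) * x) * (4 / 3) := by
            have h5 : Real.exp (-(k / 4) * s) ≤ Real.exp (-(k / 4) * x + 1 / 4) := by
              apply Real.exp_le_exp.2
              nlinarith
            have h6 : Real.exp (1 / 4) ≤ 4 / 3 := by
              have := Real.add_one_le_exp (-(1 / 4) : ℝ)
              rw [Real.exp_neg] at this
              have hp := Real.exp_pos (1 / 4 : ℝ)
              have h7 : Real.exp (1 / 4 : ℝ) * (Real.exp (1 / 4 : ℝ))⁻¹ = 1 :=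
                mul_inv_cancel₀ hp.ne'
              nlinarith
            rw [Real.exp_add] at h5
            exact h5.trans (by gcongr)
          rw [mul_assoc]
          gcongr)
      have hkT2 : (k * T) ^ 2 ≤ 1 / 4 := by
        have : 0 < k * T := by positivity
        nlinarith
      rw [show D * (Real.exp (-(k / 4) * x) * -(k / 4))
        = -(k / 4) * (D * Real.exp (-(k / 4) * x)) by ring]
      generalize D * Real.exp (-(k / 4) * x) = B at *
      generalize ξ (x - T) = v at *
      generalize ξ x = u at *
      have h8 : (u - v) ^ 2 ≤ B / 3 := by nlinarith
      have h9 : 2 * u * (u - v) ≤ B + B / 3 := by nlinarith [sq_nonneg (u - (u - v))]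
      have h10 : 2 * u * (-k * v) = k * (-2 * u ^ 2 + 2 * u * (u - v)) := by ring
      have h11 : k * (-2 * u ^ 2 + 2 * u * (u - v)) ≤ k * (-2 * B + (B + B / 3)) := by
        exact mul_le_mul_of_nonneg_left (by linarith) hk.le
      nlinarith [mul_pos hk hBp]
  intro t ht
  obtain ⟨n, hn⟩ := exists_nat_ge (t / T)
  refine key n t ht ?_
  rw [div_le_iff₀ hT] at hn
  linarith

lemma init_aux (r L : ℝ) (hr : 0 < r) (hL : 0 < L) (f ξ : ℝ → ℝ)
    (hf : ContinuousOn f (Set.Icc 0 L)) (hξc : ContinuousOn ξ (Set.Ici 0))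
    (hd : ∀ t, 0 < t → t < L / r → HasDerivAt ξ (f (L - r * t)) t)
    (t : ℝ) (ht : 0 ≤ t) (htT : t ≤ L / r) :
    ξ t ^ 2 ≤ Real.exp (L / r) * (1 + 1 / r) * ((∫ x in (0:ℝ)..L, f x ^ 2) + ξ 0 ^ 2) := by
  set g : ℝ → ℝ := fun x => f (max 0 (min L x)) with hg
  have hgc : Continuous g := by
    refine hf.comp_continuous (by fun_prop) ?_
    intro x
    exact ⟨le_max_left _ _, max_le hL.le (min_le_left _ _)⟩
  have hgf : ∀ x ∈ Set.Icc 0 L, g x = f x := by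
    intro x hx
    simp only [hg]
    rw [min_eq_right hx.2, max_eq_right hx.1]
  have hJ : (∫ x in (0:ℝ)..L, f x ^ 2) = ∫ x in (0:ℝ)..L, g x ^ 2 := by
    refine intervalIntegral.integral_congr ?_
    intro x hx
    rw [Set.uIcc_of_le hL.le] at hx
    simp only [hgf x hx]
  rw [hJ]
  set P : ℝ → ℝ := fun y => ∫ x in (0:ℝ)..y, g x ^ 2 with hP
  have hPd : ∀ y, HasDerivAt P (g y ^ 2) y := fun y =>
    (hgc.pow 2).integral_hasStrictDerivAt 0 y |>.hasDerivAt
  have hPc : Continuous P := continuous_iff_continuousAt.2 fun y => (hPd y).continuousAt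
  have hrT : r * (L / r) = L := by field_simp
  have hanti : AntitoneOn (fun t => Real.exp (-t) * ξ t ^ 2 + P (L - r * t) / r)
      (Set.Icc 0 (L / r)) := by
    have hder : ∀ s ∈ Set.Ioo 0 (L / r),
      HasDerivAt (fun t => Real.exp (-t) * ξ t ^ 2 + P (L - r * t) / r)
        (Real.exp (-s) * (-1) * ξ s ^ 2 + Real.exp (-s) * (2 * ξ s * f (L - r * s))
          + g (L - r * s) ^ 2 * (-r) / r) s := by
      intro s hs
      have h1 : HasDerivAt (fun t : ℝ => Real.exp (-t)) (Real.exp (-s) * (-1)) s :=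
        (hasDerivAt_neg s).exp
      have h2 : HasDerivAt (fun t => ξ t ^ 2) (2 * ξ s * f (L - r * s)) s := by
        have := (hd s hs.1 hs.2).pow 2
        exact this.congr_deriv (by simp)
      have h3 : HasDerivAt (fun t : ℝ => L - r * t) (-r) s := by
        simpa using ((hasDerivAt_id s).const_mul r).const_sub L
      have h4 : HasDerivAt (fun t : ℝ => P (L - r * t)) (g (L - r * s) ^ 2 * (-r)) s := by
        have q := HasDerivAt.comp (h := fun t : ℝ => L - r * t) s (hPd (L - r * s)) h3
        exact q
      exact (h1.mul h2).add (h4.div_const r)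
    refine antitoneOn_of_deriv_nonpos (convex_Icc _ _) ?_ ?_ ?_
    · have : ContinuousOn ξ (Set.Icc 0 (L / r)) := hξc.mono Set.Icc_subset_Ici_self
      fun_prop
    · rw [interior_Icc]
      exact fun s hs => (hder s hs).differentiableAt.differentiableWithinAt
    · rw [interior_Icc]
      intro s hs
      rw [(hder s hs).deriv]
      have h5 : r * s ≤ L := by rw [← hrT]; gcongr; exact hs.2.le
      have h6 : 0 ≤ r * s := mul_nonneg hr.le hs.1.le
      rw [hgf _ ⟨by linarith, by linarith⟩]
      have he : Real.exp (-s) ≤ 1 := Real.exp_le_one_iff.2 (by linarith [hs.1])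
      have he0 := Real.exp_pos (-s)
      generalize Real.exp (-s) = e at *
      generalize f (L - r * s) = b at *
      generalize ξ s = c at *
      have : b ^ 2 * (-r) / r = - b ^ 2 := by field_simp
      rw [this]
      nlinarith [mul_nonneg he0.le (sq_nonneg (b - c)), mul_nonneg (sub_nonneg.2 he) (sq_nonneg b)]
  have h := hanti ⟨le_rfl, by positivity⟩ ⟨ht, htT⟩ ht
  simp only [neg_zero, Real.exp_zero, one_mul, mul_zero, sub_zero] at h
  have h5 : r * t ≤ L := by rw [← hrT]; gcongr
  have hPn : 0 ≤ P (L - r * t) :=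
    intervalIntegral.integral_nonneg (by linarith) fun x _ => sq_nonneg _
  have hPL : 0 ≤ P L := intervalIntegral.integral_nonneg hL.le fun x _ => sq_nonneg _
  change ξ t ^ 2 ≤ Real.exp (L / r) * (1 + 1 / r) * (P L + ξ 0 ^ 2)
  have h6 : Real.exp (-t) * ξ t ^ 2 ≤ (1 + 1 / r) * (P L + ξ 0 ^ 2) := by
    have : 0 ≤ P (L - r * t) / r := by positivity
    have h8 : 0 ≤ 1 / r * ξ 0 ^ 2 := by positivity
    have : P L / r = 1 / r * P L := by ring
    nlinarith
  calc ξ t ^ 2 = Real.exp t * (Real.exp (-t) * ξ t ^ 2) := by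
        rw [← mul_assoc, ← Real.exp_add]; simp
    _ ≤ Real.exp (L / r) * ((1 + 1 / r) * (P L + ξ 0 ^ 2)) := by gcongr
    _ = _ := by ring

lemma small_aux (r L kI : ℝ) (hr : 0 < r) (hL : 0 < L)
    (h : kI < r / (2 * L) * PiFun (2 - Real.sqrt 2)) : kI * (L / r) ≤ 1 / 2 := by
  have h2 : Real.sqrt 2 ≤ 2 := by
    rw [Real.sqrt_le_left (by norm_num)]; norm_num
  have hP : PiFun (2 - Real.sqrt 2) ≤ 1 := by
    unfold PiFun
    have h1 : Real.sqrt ((2 - Real.sqrt 2) * (2 - (2 - Real.sqrt 2))) ≤ 1 := by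
      rw [Real.sqrt_le_left (by norm_num)]
      nlinarith [sq_nonneg (Real.sqrt 2 - 1)]
    have h3 : Real.exp (-(2 - Real.sqrt 2) / 2) ≤ 1 := Real.exp_le_one_iff.2 (by linarith)
    exact mul_le_one₀ h1 (Real.exp_pos _).le h3
  have h3 : kI ≤ r / (2 * L) := by
    refine h.le.trans ?_
    exact mul_le_of_le_one_right (by positivity) hP
  calc kI * (L / r) ≤ r / (2 * L) * (L / r) := by gcongr
    _ = 1 / 2 := by field_simp

theorem linear_exponential_stability (r L kI : ℝ) (hr : 0 < r) (hL : 0 < L)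
    (hkI : kI ∈ Set.Ioo 0 (r / (2 * L) * PiFun (2 - Real.sqrt 2))) :
    ∃ M ≥ (1 : ℝ), ∃ ω > (0 : ℝ), ∀ (φ : ℝ → ℝ → ℝ) (ξ : ℝ → ℝ),
      ContDiffOn ℝ 1 (fun p : ℝ × ℝ => φ p.1 p.2) (Set.Icc 0 L ×ˢ Set.Ici 0) →
      ContDiffOn ℝ 1 ξ (Set.Ici 0) →
      (∀ x ∈ Set.Ioo (0 : ℝ) L, ∀ t ∈ Set.Ici (0 : ℝ),
        deriv (fun τ => φ x τ) t = -r * deriv (fun y => φ y t) x) →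
      (∀ t ∈ Set.Ici (0 : ℝ), deriv ξ t = φ L t) →
      (∀ t ∈ Set.Ici (0 : ℝ), φ 0 t = -kI * ξ t) →
      ∀ t ∈ Set.Ici (0 : ℝ),
        (∫ x in (0 : ℝ)..L, (φ x t) ^ 2) + (ξ t) ^ 2 ≤
          M * Real.exp (-ω * t) * ((∫ x in (0 : ℝ)..L, (φ x 0) ^ 2) + (ξ 0) ^ 2) := by
  have hk := hkI.1
  have hkT := small_aux r L kI hr hL hkI.2
  set T : ℝ := L / r with hTdef
  have hT : 0 < T := by positivity
  have hrT : r * T = L := by rw [hTdef]; field_simp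
  set C : ℝ := Real.exp T * (1 + 1 / r) with hC
  have hCp : 0 < C := by positivity
  set A : ℝ := 4 * C * Real.exp (kI / 4 * (2 * T)) with hA
  have hAp : 0 < A := by positivity
  have hM1 : 1 ≤ (L * kI ^ 2 * A + 1) * Real.exp (kI / 4 * T) := by
    have h1 : 1 ≤ Real.exp (kI / 4 * T) := Real.one_le_exp (by positivity)
    have h2 : 1 ≤ L * kI ^ 2 * A + 1 := by
      have : 0 ≤ L * kI ^ 2 * A := by positivity
      linarith
    nlinarith
  refine ⟨A + (L * kI ^ 2 * A + 1) * Real.exp (kI / 4 * T), by linarith, kI / 4,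
    by positivity, ?_⟩
  intro φ ξ hφ hξ hpde hξd hbc
  have htr := transport_aux r L hr φ hφ hpde
  have hφx : ∀ t, 0 ≤ t → ContinuousOn (fun x => φ x t) (Set.Icc 0 L) := by
    intro t ht
    have h1 : ContinuousOn (fun x : ℝ => ((x, t) : ℝ × ℝ)) (Set.Icc 0 L) := by fun_prop
    exact hφ.continuousOn.comp h1 fun x hx => ⟨hx, ht⟩
  have hder : ∀ t, 0 < t → HasDerivAt ξ (φ L t) t := by
    intro t ht
    have h1 : DifferentiableAt ℝ ξ t :=
      (hξ.contDiffAt (Ici_mem_nhds ht)).differentiableAt (by norm_num)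
    have h2 := h1.hasDerivAt
    rwa [hξd t ht.le] at h2
  have hout : ∀ x t, 0 ≤ x → x ≤ L → x / r ≤ t → φ x t = -kI * ξ (t - x / r) := by
    intro x t hx hxL hxt
    have hxr : r * (x / r) = x := by field_simp
    have h1 := htr 0 (t - x / r) (x / r) le_rfl (by linarith) (by positivity) (by linarith)
    rw [← hbc (t - x / r) (by simp only [Set.mem_Ici]; linarith), ← h1, hxr]
    simp
  have hd2 : ∀ t, T ≤ t → HasDerivAt ξ (-kI * ξ (t - T)) t := by
    intro t ht
    rw [← hout L t hL.le le_rfl ht]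
    exact hder t (by linarith)
  set E : ℝ := (∫ x in (0 : ℝ)..L, (φ x 0) ^ 2) + (ξ 0) ^ 2 with hE
  have hJ0 : 0 ≤ ∫ x in (0 : ℝ)..L, (φ x 0) ^ 2 :=
    intervalIntegral.integral_nonneg hL.le fun x _ => sq_nonneg _
  have hE0 : 0 ≤ E := by positivity
  have hi1 : ∀ t, 0 ≤ t → t ≤ T → ξ t ^ 2 ≤ C * E := by
    intro t h1 h2
    refine init_aux r L hr hL (fun x => φ x 0) ξ (hφx 0 le_rfl) hξ.continuousOn ?_ t h1 h2
    intro s hs hsT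
    have h3 : r * s ≤ L := by rw [← hrT]; gcongr
    have h4 := htr (L - r * s) 0 s (by linarith) le_rfl hs.le (by linarith)
    simp only [sub_add_cancel, zero_add] at h4
    simp only [← h4]
    exact hder s hs
  have hi2 : ∀ t, 0 ≤ t → t ≤ 2 * T → ξ t ^ 2 ≤ 4 * C * E := by
    intro t h1 h2
    have hCE : 0 ≤ C * E := by positivity
    rcases le_total t T with h3 | h3
    · linarith [hi1 t h1 h3]
    have h4 := diff_aux T kI hk ξ hd2 T t (C * E) le_rfl h3 (by linarith)
      (fun s hs1 hs2 => hi1 s (by linarith) (by linarith))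
    have h5 := hi1 T hT.le le_rfl
    have h6 : (kI * T) ^ 2 ≤ 1 := by
      have : 0 < kI * T := by positivity
      nlinarith
    nlinarith [sq_nonneg (ξ t - ξ T - ξ T)]
  have hdec : ∀ t, 0 ≤ t → ξ t ^ 2 ≤ A * E * Real.exp (-(kI / 4) * t) := by
    intro t ht
    refine le_of_forall_pos_le_add fun ε hε => ?_
    have h := decay_aux T kI (A * E + ε) hT hk hkT (by positivity) ξ hd2 (by
      intro s hs1 hs2
      have h1 := hi2 s hs1 hs2
      have h2 : 1 ≤ Real.exp (kI / 4 * (2 * T)) * Real.exp (-(kI / 4) * s) := by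
        rw [← Real.exp_add]
        apply Real.one_le_exp
        nlinarith
      have h3 : 0 ≤ 4 * C * E := by positivity
      have h4 : 0 ≤ ε * Real.exp (-(kI / 4) * s) := by positivity
      calc ξ s ^ 2 ≤ 4 * C * E * 1 := by linarith
        _ ≤ 4 * C * E * (Real.exp (kI / 4 * (2 * T)) * Real.exp (-(kI / 4) * s)) := by gcongr
        _ ≤ _ := by rw [hA]; linarith) t ht
    have h5 : Real.exp (-(kI / 4) * t) ≤ 1 := Real.exp_le_one_iff.2 (by nlinarith)
    nlinarith
  intro t ht
  have ht0 : 0 ≤ t := ht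
  have hmain : (∫ x in (0 : ℝ)..L, (φ x t) ^ 2) ≤
      (L * kI ^ 2 * A + 1) * Real.exp (kI / 4 * T) * Real.exp (-(kI / 4) * t) * E := by
    have hpt : ∀ x, 0 ≤ x → x ≤ L → x / r ≤ t →
        φ x t ^ 2 ≤ kI ^ 2 * (A * E * (Real.exp (kI / 4 * T) * Real.exp (-(kI / 4) * t))) := by
      intro x hx hxL hxt
      rw [hout x t hx hxL hxt, mul_pow, neg_sq]
      gcongr
      refine (hdec _ (by linarith)).trans ?_
      gcongr
      rw [← Real.exp_add]
      apply Real.exp_le_exp.2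
      have : x / r ≤ T := by rw [hTdef]; gcongr
      nlinarith
    have hint : ∀ s, 0 ≤ s → ∀ a b, 0 ≤ a → a ≤ b → b ≤ L →
        IntervalIntegrable (fun x => φ x s ^ 2) MeasureTheory.volume a b := by
      intro s hs a b ha hab hb
      refine ContinuousOn.intervalIntegrable ?_
      rw [Set.uIcc_of_le hab]
      exact ((hφx s hs).mono (Set.Icc_subset_Icc ha hb)).pow 2
    set Q : ℝ := Real.exp (kI / 4 * T) * Real.exp (-(kI / 4) * t) with hQ
    have hQ0 : 0 < Q := by positivity
    have hbd : ∀ b, 0 ≤ b → b ≤ L → b / r ≤ t →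
        (∫ x in (0 : ℝ)..b, (φ x t) ^ 2) ≤ L * (kI ^ 2 * (A * E * Q)) := by
      intro b hb hbL hbt
      have h1 : (∫ x in (0 : ℝ)..b, (φ x t) ^ 2) ≤ ∫ x in (0 : ℝ)..b, kI ^ 2 * (A * E * Q) := by
        refine intervalIntegral.integral_mono_on hb (hint t ht0 0 b le_rfl hb hbL)
          intervalIntegrable_const ?_
        intro x hx
        exact hpt x hx.1 (hx.2.trans hbL) (le_trans (by gcongr; exact hx.2) hbt)
      rw [intervalIntegral.integral_const, smul_eq_mul, sub_zero] at h1
      exact h1.trans (by gcongr)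
    have hfin : L * (kI ^ 2 * (A * E * Q)) + Q * E =
        (L * kI ^ 2 * A + 1) * Real.exp (kI / 4 * T) * Real.exp (-(kI / 4) * t) * E := by
      rw [hQ]; ring
    rw [← hfin]
    have hQE : 0 ≤ Q * E := by positivity
    rcases le_total T t with h | h
    · linarith [hbd L hL.le le_rfl h]
    have hrt : r * t ≤ L := by rw [← hrT]; gcongr
    have hrt0 : 0 ≤ r * t := by positivity
    rw [← intervalIntegral.integral_add_adjacent_intervals
      (hint t ht0 0 (r * t) le_rfl hrt0 hrt) (hint t ht0 (r * t) L hrt0 hrt le_rfl)]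
    have h1 := hbd (r * t) hrt0 hrt (by field_simp; exact le_rfl)
    have h2 : (∫ x in (r * t)..L, (φ x t) ^ 2) ≤ ∫ x in (0 : ℝ)..L, (φ x 0) ^ 2 := by
      have h3 : (∫ x in (r * t)..L, (φ x t) ^ 2) = ∫ x in (r * t)..L, (φ (x - r * t) 0) ^ 2 := by
        refine intervalIntegral.integral_congr ?_
        intro x hx
        rw [Set.uIcc_of_le hrt] at hx
        have h4 := htr (x - r * t) 0 t (by linarith [hx.1]) le_rfl ht0 (by linarith [hx.2])
        simp only [sub_add_cancel, zero_add] at h4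
        simp only [h4]
      rw [h3, intervalIntegral.integral_comp_sub_right (fun x => φ x 0 ^ 2) (r * t), sub_self]
      exact intervalIntegral.integral_mono_interval le_rfl (by linarith) (by linarith)
        (Filter.Eventually.of_forall fun x => sq_nonneg _) (hint 0 le_rfl 0 L le_rfl hL.le le_rfl)
    have hQ1 : 1 ≤ Q := by
      rw [hQ, ← Real.exp_add]
      apply Real.one_le_exp
      nlinarith
    have hξ0 := sq_nonneg (ξ 0)
    nlinarith
  have h2 := hdec t ht0
  calc _ ≤ _ := add_le_add hmain h2
    _ = _ := by ring
end

section
/- Let r, L > 0, let k_I ∈ (0, k_I*) where k_I* = (r/(2L))·Π(2−√2), let μ ∈ (0, (2−√2)/L] with (r/(2L))·Π(μL) > k_I, set q₁ = 2k_I, q₂ = r k_I e^{−μL/2}, and let q₃, q₄ > 0. Define S(φ, ξ) = V(φ, ξ) + q₃ ∫₀^L e^{−μx} φ'(x)² dx + q₄ ∫₀^L e^{−μx} φ''(x)² dx. Then there exists a constant K ≥ 1 such that for every twice continuously differentiable φ : [0,L] → ℝ and every ξ ∈ ℝ, K^{−1}·(∫₀^L (φ(x)² + φ'(x)² + φ''(x)²)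 dx + ξ²) ≤ S(φ, ξ) ≤ K·(∫₀^L (φ(x)² + φ'(x)² + φ''(x)²) dx + ξ²). -/
/-- The Lyapunov functional
`V(φ, ξ) = ∫₀^L (φ(x)² e^{−μx} + q₁ ξ φ(x) e^{−μx/2}) dx + q₂ ξ²`. -/
noncomputable def V (L μ q₁ q₂ : ℝ) (φ : ℝ → ℝ) (ξ : ℝ) : ℝ :=
  (∫ x in (0 : ℝ)..L, (φ x ^ 2 * Real.exp (-μ * x) + q₁ * ξ * φ x * Real.exp (-μ * x / 2)))
    + q₂ * ξ ^ 2

/-- The extended Lyapunov functional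
`S(φ, ξ) = V(φ, ξ) + q₃ ∫₀^L e^{−μx} φ'(x)² dx + q₄ ∫₀^L e^{−μx} φ''(x)² dx`. -/
noncomputable def S (L μ q₁ q₂ q₃ q₄ : ℝ) (φ : ℝ → ℝ) (ξ : ℝ) : ℝ :=
  V L μ q₁ q₂ φ ξ + q₃ * (∫ x in (0 : ℝ)..L, Real.exp (-μ * x) * (deriv φ x) ^ 2)
    + q₄ * (∫ x in (0 : ℝ)..L, Real.exp (-μ * x) * (deriv (deriv φ) x) ^ 2)

open MeasureTheory in
lemma aux_int (L : ℝ) (hL : 0 < L) (f g : ℝ → ℝ) (hg : ContinuousOn g (Set.Icc 0 L))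
    (h : ∀ x ∈ Set.Ioo 0 L, f x = g x) :
    IntervalIntegrable (fun x => f x ^ 2) volume 0 L := by
  rw [intervalIntegrable_iff_integrableOn_Ioo_of_le hL.le]
  have h1 : IntegrableOn (fun x => g x ^ 2) (Set.Ioo 0 L) volume :=
    ((hg.pow 2).integrableOn_Icc).mono_set Set.Ioo_subset_Icc_self
  refine h1.congr_fun (fun x hx => ?_) measurableSet_Ioo
  simp [h x hx]

open MeasureTheory in
lemma aux_w (L μ : ℝ) (hL : 0 < L) (hμ : 0 < μ) (f : ℝ → ℝ)
    (hf : IntervalIntegrable (fun x => f x ^ 2) volume 0 L) :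
    Real.exp (-μ * L) * (∫ x in (0:ℝ)..L, f x ^ 2) ≤
      (∫ x in (0:ℝ)..L, Real.exp (-μ * x) * f x ^ 2) ∧
    (∫ x in (0:ℝ)..L, Real.exp (-μ * x) * f x ^ 2) ≤ ∫ x in (0:ℝ)..L, f x ^ 2 := by
  have hi : IntervalIntegrable (fun x => Real.exp (-μ * x) * f x ^ 2) volume 0 L :=
    hf.continuousOn_mul (by fun_prop)
  constructor
  · rw [← intervalIntegral.integral_const_mul]
    refine intervalIntegral.integral_mono_on hL.le (hf.const_mul _) hi (fun x hx => ?_)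
    have : Real.exp (-μ * L) ≤ Real.exp (-μ * x) := Real.exp_le_exp.2 (by nlinarith [hx.2])
    exact mul_le_mul_of_nonneg_right this (sq_nonneg _)
  · refine intervalIntegral.integral_mono_on hL.le hi hf (fun x hx => ?_)
    have : Real.exp (-μ * x) ≤ 1 := Real.exp_le_one_iff.2 (by nlinarith [hx.1])
    nlinarith [sq_nonneg (f x)]

lemma aux_reg (L : ℝ) (hL : 0 < L) (φ : ℝ → ℝ) (h : ContDiffOn ℝ 2 φ (Set.Icc 0 L)) :
    ∃ g g2 : ℝ → ℝ, ContinuousOn g (Set.Icc 0 L) ∧ ContinuousOn g2 (Set.Icc 0 L) ∧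
      (∀ x ∈ Set.Ioo 0 L, deriv φ x = g x) ∧ (∀ x ∈ Set.Ioo 0 L, deriv (deriv φ) x = g2 x) := by
  have hu := uniqueDiffOn_Icc hL
  have h1 : ContDiffOn ℝ 1 (derivWithin φ (Set.Icc 0 L)) (Set.Icc 0 L) :=
    h.derivWithin hu (by norm_num)
  have e1 : ∀ x ∈ Set.Ioo 0 L, deriv φ x = derivWithin φ (Set.Icc 0 L) x := fun x hx =>
    (derivWithin_of_mem_nhds (Icc_mem_nhds hx.1 hx.2)).symm
  refine ⟨_, _, h1.continuousOn, h1.continuousOn_derivWithin hu le_rfl, e1, fun x hx => ?_⟩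
  rw [derivWithin_of_mem_nhds (Icc_mem_nhds hx.1 hx.2)]
  apply Filter.EventuallyEq.deriv_eq
  filter_upwards [Ioo_mem_nhds hx.1 hx.2] with y hy using e1 y hy

lemma aux_k (r L kI μ : ℝ) (hr : 0 < r) (hL : 0 < L)
    (h : r / (2 * L) * PiFun (μ * L) > kI) : 2 * L * kI ≤ r * Real.exp (-μ * L / 2) := by
  unfold PiFun at h
  have h1 : Real.sqrt (μ * L * (2 - μ * L)) ≤ 1 := by
    rw [Real.sqrt_le_iff]; refine ⟨by norm_num, ?_⟩; nlinarith [sq_nonneg (μ * L - 1)]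
  have h2 : -(μ * L) / 2 = -μ * L / 2 := by ring
  rw [h2] at h
  have hE := Real.exp_pos (-μ * L / 2)
  have h3 : Real.sqrt (μ * L * (2 - μ * L)) * Real.exp (-μ * L / 2) ≤ Real.exp (-μ * L / 2) := by
    nlinarith
  have h4 : kI ≤ r / (2 * L) * Real.exp (-μ * L / 2) :=
    h.le.trans (mul_le_mul_of_nonneg_left h3 (by positivity))
  calc 2 * L * kI ≤ 2 * L * (r / (2 * L) * Real.exp (-μ * L / 2)) :=
        mul_le_mul_of_nonneg_left h4 (by positivity)
    _ = _ := by field_simp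

open MeasureTheory in
lemma aux_V (L μ k q ξ : ℝ) (hL : 0 < L) (φ : ℝ → ℝ) (hφ : ContinuousOn φ (Set.Icc 0 L))
    (hq : 2 * L * k ^ 2 ≤ q) :
    (1/3) * (∫ x in (0:ℝ)..L, Real.exp (-μ * x) * φ x ^ 2) + L * k ^ 2 / 2 * ξ ^ 2
      ≤ V L μ (2 * k) q φ ξ ∧
    V L μ (2 * k) q φ ξ ≤ 2 * (∫ x in (0:ℝ)..L, Real.exp (-μ * x) * φ x ^ 2)
      + (L * k ^ 2 + q) * ξ ^ 2 := by
  have hφ' : ContinuousOn φ (Set.uIcc 0 L) := by rwa [Set.uIcc_of_le hL.le]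
  have i1 : IntervalIntegrable (fun x => Real.exp (-μ * x) * φ x ^ 2) volume 0 L :=
    ContinuousOn.intervalIntegrable (by fun_prop)
  have i2 : IntervalIntegrable (fun x => φ x ^ 2 * Real.exp (-μ * x)
      + 2 * k * ξ * φ x * Real.exp (-μ * x / 2)) volume 0 L :=
    ContinuousOn.intervalIntegrable (by fun_prop)
  have key : ∀ x, Real.exp (-μ * x) = Real.exp (-μ * x / 2) ^ 2 := fun x => by
    rw [← Real.exp_nat_mul]; congr 1; push_cast; ring
  have cst : ∀ c : ℝ, IntervalIntegrable (fun _ : ℝ => c) volume 0 L := fun c =>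
    intervalIntegrable_const
  have lo := intervalIntegral.integral_mono_on hL.le
    ((i1.const_mul (1/3)).sub (cst (3/2 * k ^ 2 * ξ ^ 2))) i2 (fun x _ => by
      rw [key]
      nlinarith [sq_nonneg (2 * (φ x * Real.exp (-μ * x / 2)) + 3 * k * ξ)])
  have hi := intervalIntegral.integral_mono_on hL.le i2
    ((i1.const_mul 2).add (cst (k ^ 2 * ξ ^ 2))) (fun x _ => by
      rw [key]
      nlinarith [sq_nonneg ((φ x * Real.exp (-μ * x / 2)) - k * ξ)])
  rw [intervalIntegral.integral_sub (i1.const_mul _) (cst _),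
    intervalIntegral.integral_const_mul, intervalIntegral.integral_const] at lo
  rw [intervalIntegral.integral_add (i1.const_mul _) (cst _),
    intervalIntegral.integral_const_mul, intervalIntegral.integral_const] at hi
  simp only [smul_eq_mul, sub_zero] at lo hi
  unfold V
  constructor
  · nlinarith [mul_le_mul_of_nonneg_right hq (sq_nonneg ξ)]
  · nlinarith

/-- the extended Lyapunov functional `S` is equivalent to the squared
`H²`-type norm: there is `K ≥ 1` with
`K⁻¹(∫₀^L (φ² + φ'² + φ''²) + ξ²) ≤ S(φ,ξ) ≤ K(∫₀^L (φ² + φ'² + φ''²) + ξ²)`. -/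
theorem S_equiv_H2_norm (r L kI μ q₃ q₄ : ℝ) (hr : 0 < r) (hL : 0 < L)
    (hkI : kI ∈ Set.Ioo 0 (r / (2 * L) * PiFun (2 - Real.sqrt 2)))
    (hμ : μ ∈ Set.Ioc 0 ((2 - Real.sqrt 2) / L))
    (hμkI : r / (2 * L) * PiFun (μ * L) > kI)
    (hq₃ : 0 < q₃) (hq₄ : 0 < q₄) :
    ∃ K : ℝ, 1 ≤ K ∧ ∀ (φ : ℝ → ℝ) (ξ : ℝ), ContDiffOn ℝ 2 φ (Set.Icc 0 L) →
      K⁻¹ * ((∫ x in (0 : ℝ)..L,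
            ((φ x) ^ 2 + (deriv φ x) ^ 2 + (deriv (deriv φ) x) ^ 2)) + ξ ^ 2) ≤
          S L μ (2 * kI) (r * kI * Real.exp (-μ * L / 2)) q₃ q₄ φ ξ ∧
        S L μ (2 * kI) (r * kI * Real.exp (-μ * L / 2)) q₃ q₄ φ ξ ≤
          K * ((∫ x in (0 : ℝ)..L,
            ((φ x) ^ 2 + (deriv φ x) ^ 2 + (deriv (deriv φ) x) ^ 2)) + ξ ^ 2) := by
  obtain ⟨hk, -⟩ := hkI
  obtain ⟨hμ, -⟩ := hμ
  have hkk := aux_k r L kI μ hr hL hμkI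
  set q := r * kI * Real.exp (-μ * L / 2) with hqdef
  have hq0 : 0 < q := by positivity
  have hq : 2 * L * kI ^ 2 ≤ q := by nlinarith
  set e := Real.exp (-μ * L) with he
  have he0 : 0 < e := Real.exp_pos _
  have p1 : 0 < (e / 3)⁻¹ := by positivity
  have p2 : 0 < (L * kI ^ 2 / 2)⁻¹ := by positivity
  have p3 : 0 < (q₃ * e)⁻¹ := by positivity
  have p4 : 0 < (q₄ * e)⁻¹ := by positivity
  have p5 : 0 < L * kI ^ 2 := by positivity
  obtain ⟨K, hK⟩ : ∃ K, K = 2 + (e / 3)⁻¹ + (L * kI ^ 2 / 2)⁻¹ + (q₃ * e)⁻¹ + (q₄ * e)⁻¹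
    + (L * kI ^ 2 + q) + q₃ + q₄ := ⟨_, rfl⟩
  refine ⟨K, by linarith, fun φ ξ h => ?_⟩
  obtain ⟨g, g2, hg, hg2, e1, e2⟩ := aux_reg L hL φ h
  have i0 := aux_int L hL φ φ h.continuousOn (fun _ _ => rfl)
  have i1 := aux_int L hL _ g hg e1
  have i2 := aux_int L hL _ g2 hg2 e2
  have w0 := aux_w L μ hL hμ _ i0
  have w1 := aux_w L μ hL hμ _ i1
  have w2 := aux_w L μ hL hμ _ i2
  have v := aux_V L μ kI q ξ hL φ h.continuousOn hq
  have n0 : 0 ≤ ∫ x in (0:ℝ)..L, φ x ^ 2 :=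
    intervalIntegral.integral_nonneg hL.le (fun x _ => sq_nonneg _)
  have n1 : 0 ≤ ∫ x in (0:ℝ)..L, deriv φ x ^ 2 :=
    intervalIntegral.integral_nonneg hL.le (fun x _ => sq_nonneg _)
  have n2 : 0 ≤ ∫ x in (0:ℝ)..L, deriv (deriv φ) x ^ 2 :=
    intervalIntegral.integral_nonneg hL.le (fun x _ => sq_nonneg _)
  rw [intervalIntegral.integral_add (i0.add i1) i2, intervalIntegral.integral_add i0 i1]
  unfold S
  rw [← he] at w0 w1 w2
  generalize (∫ x in (0:ℝ)..L, φ x ^ 2) = A at *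
  generalize (∫ x in (0:ℝ)..L, deriv φ x ^ 2) = B at *
  generalize (∫ x in (0:ℝ)..L, deriv (deriv φ) x ^ 2) = D at *
  generalize (∫ x in (0:ℝ)..L, Real.exp (-μ * x) * φ x ^ 2) = A' at *
  generalize (∫ x in (0:ℝ)..L, Real.exp (-μ * x) * deriv φ x ^ 2) = B' at *
  generalize (∫ x in (0:ℝ)..L, Real.exp (-μ * x) * deriv (deriv φ) x ^ 2) = D' at *
  have nx := sq_nonneg ξ
  constructor
  · have k1 : K⁻¹ ≤ e / 3 := inv_le_of_inv_le₀ (by positivity) (by linarith)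
    have k2 : K⁻¹ ≤ L * kI ^ 2 / 2 := inv_le_of_inv_le₀ (by positivity) (by linarith)
    have k3 : K⁻¹ ≤ q₃ * e := inv_le_of_inv_le₀ (by positivity) (by linarith)
    have k4 : K⁻¹ ≤ q₄ * e := inv_le_of_inv_le₀ (by positivity) (by linarith)
    have m1 := mul_le_mul_of_nonneg_right k1 n0
    have m2 := mul_le_mul_of_nonneg_right k2 nx
    have m3 := mul_le_mul_of_nonneg_right k3 n1
    have m4 := mul_le_mul_of_nonneg_right k4 n2
    have m5 := mul_le_mul_of_nonneg_left w1.1 hq₃.le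
    have m6 := mul_le_mul_of_nonneg_left w2.1 hq₄.le
    linarith [v.1, w0.1]
  · have m1 := mul_le_mul_of_nonneg_right (show 2 ≤ K by linarith) n0
    have m2 := mul_le_mul_of_nonneg_right (show L * kI ^ 2 + q ≤ K by linarith) nx
    have m3 := mul_le_mul_of_nonneg_right (show q₃ ≤ K by linarith) n1
    have m4 := mul_le_mul_of_nonneg_right (show q₄ ≤ K by linarith) n2
    have m5 := mul_le_mul_of_nonneg_left w1.2 hq₃.le
    have m6 := mul_le_mul_of_nonneg_left w2.2 hq₄.le
    linarith [v.2, w0.2]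
end
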